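/- arXiv:1708.06604 — 4 statements merged into one kernel-verified Lean document; each statement's English description precedes it below -/
import Mathlib

section
/- Let m ∈ ℕ be odd. Then the m-th derivative β^(m) of Nielsen's β-function is negative and strictly increasing on (0, ∞); moreover, for every m ≥ 1, the function x ↦ |β^(m)(x)| is strictly decreasing on (0, ∞). -/
/-!
Differentiating under the integral sign gives, for `x > 0`,
`β^(m)(x) = (-1)^m J_m(x)`, where `J_m(x) = ∫₀^∞ t^m e^{-xt} / (1 + e^{-t}) dt`
(`hasDerivAt_betaMoment`, `iteratedDeriv_nielsenBeta`). The integrand of `J_m` is positive, so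
`J_m > 0`; since `J_m' = -J_{m+1} < 0`, each `J_m` is strictly decreasing. Hence
`|β^(m)| = J_m` is strictly decreasing, and for odd `m` the function `β^(m) = -J_m` is negative
and strictly increasing.
-/

open Real MeasureTheory Set

/-- Nielsen's beta function: `β(x) = ∫₀^∞ e^{-x t} / (1 + e^{-t}) dt`. -/
noncomputable def nielsenBeta (x : ℝ) : ℝ :=
  ∫ t in Set.Ioi (0:ℝ), Real.exp (-x * t) / (1 + Real.exp (-t))

/-- The integrand `t^m e^{-xt} / (1 + e^{-t})` of the `m`-th moment. -/
noncomputable def betaKernel (m : ℕ) (x t : ℝ) : ℝ :=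
  t ^ m * Real.exp (-x * t) / (1 + Real.exp (-t))

/-- The moment integral `J_m(x) = ∫₀^∞ t^m e^{-xt} / (1 + e^{-t}) dt`, which equals
`(-1)^m β^(m)(x)` for `x > 0`. -/
noncomputable def betaMoment (m : ℕ) (x : ℝ) : ℝ :=
  ∫ t in Set.Ioi (0:ℝ), betaKernel m x t

lemma continuous_betaKernel (m : ℕ) (x : ℝ) : Continuous (betaKernel m x) := by
  unfold betaKernel
  refine Continuous.div (by fun_prop) (by fun_prop) fun t => ?_
  positivity

lemma betaKernel_pos (m : ℕ) (x : ℝ) {t : ℝ} (ht : 0 < t) : 0 < betaKernel m x t := by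
  unfold betaKernel
  positivity

lemma betaKernel_le (m : ℕ) (x : ℝ) {t : ℝ} (ht : 0 < t) :
    betaKernel m x t ≤ t ^ m * Real.exp (-x * t) := by
  unfold betaKernel
  apply div_le_self (by positivity)
  linarith [Real.exp_pos (-t)]

lemma integrableOn_betaKernel (m : ℕ) {x : ℝ} (hx : 0 < x) :
    IntegrableOn (betaKernel m x) (Ioi 0) := by
  have h : IntegrableOn (fun t : ℝ => t ^ m * Real.exp (-x * t)) (Ioi 0) := by
    have hm : (-1 : ℝ) < m := lt_of_lt_of_le (by norm_num) (Nat.cast_nonneg m)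
    simpa using integrableOn_rpow_mul_exp_neg_mul_rpow hm one_pos hx
  refine Integrable.mono' h (continuous_betaKernel m x).aestronglyMeasurable ?_
  filter_upwards [ae_restrict_mem measurableSet_Ioi] with t ht
  rw [Real.norm_of_nonneg (betaKernel_pos m x ht).le]
  exact betaKernel_le m x ht

lemma betaKernel_anti (m : ℕ) {x y t : ℝ} (ht : 0 < t) (hxy : x ≤ y) :
    betaKernel m y t ≤ betaKernel m x t := by
  unfold betaKernel
  gcongr

lemma hasDerivAt_betaKernel (m : ℕ) (x t : ℝ) :
    HasDerivAt (fun y => betaKernel m y t) (-betaKernel (m + 1) x t) x := by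
  unfold betaKernel
  have h : HasDerivAt (fun y : ℝ => -y * t) (-1 * t) x := (hasDerivAt_neg x).mul_const t
  refine ((h.exp.const_mul (t ^ m)).div_const (1 + Real.exp (-t))).congr_deriv ?_
  ring

/-- Differentiation under the integral sign: on a neighbourhood of `x` bounded below by `x / 2`
the differentiated kernel is dominated by its value at `x / 2`. -/
lemma hasDerivAt_betaMoment (m : ℕ) {x : ℝ} (hx : 0 < x) :
    HasDerivAt (betaMoment m) (-betaMoment (m + 1) x) x := by
  have h := (hasDerivAt_integral_of_dominated_loc_of_deriv_le
    (μ := volume.restrict (Ioi (0:ℝ))) (F := betaKernel m)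
    (F' := fun y t => -betaKernel (m + 1) y t) (bound := betaKernel (m + 1) (x / 2))
    (Ioi_mem_nhds (half_lt_self hx))
    (Filter.Eventually.of_forall fun y => (continuous_betaKernel m y).aestronglyMeasurable)
    (integrableOn_betaKernel m hx)
    (continuous_betaKernel (m + 1) x).neg.aestronglyMeasurable
    (by
      filter_upwards [ae_restrict_mem measurableSet_Ioi] with t ht y hy
      rw [norm_neg, Real.norm_of_nonneg (betaKernel_pos _ y ht).le]
      exact betaKernel_anti _ ht (le_of_lt hy))
    (integrableOn_betaKernel (m + 1) (half_pos hx))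
    (Filter.Eventually.of_forall fun t y _ => hasDerivAt_betaKernel m y t)).2
  rwa [integral_neg] at h

lemma betaMoment_pos (m : ℕ) {x : ℝ} (hx : 0 < x) : 0 < betaMoment m x := by
  unfold betaMoment
  rw [setIntegral_pos_iff_support_of_nonneg_ae
    (by
      filter_upwards [ae_restrict_mem measurableSet_Ioi] with t ht
      exact (betaKernel_pos m x ht).le)
    (integrableOn_betaKernel m hx)]
  have hs : Function.support (betaKernel m x) ∩ Ioi 0 = Ioi 0 :=
    inter_eq_right.2 fun t ht => (betaKernel_pos m x ht).ne'
  simp [hs]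

lemma betaMoment_strictAntiOn (m : ℕ) : StrictAntiOn (betaMoment m) (Ioi 0) := by
  refine strictAntiOn_of_deriv_neg (convex_Ioi 0)
    (fun x hx => (hasDerivAt_betaMoment m hx).continuousAt.continuousWithinAt) fun x hx => ?_
  rw [interior_Ioi] at hx
  rw [(hasDerivAt_betaMoment m hx).deriv]
  exact neg_neg_of_pos (betaMoment_pos (m + 1) hx)

lemma iteratedDeriv_nielsenBeta (m : ℕ) {x : ℝ} (hx : 0 < x) :
    iteratedDeriv m nielsenBeta x = (-1) ^ m * betaMoment m x := by
  induction m generalizing x with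
  | zero => simp [nielsenBeta, betaMoment, betaKernel]
  | succ m ih =>
    have h : iteratedDeriv m nielsenBeta =ᶠ[nhds x] fun y => (-1) ^ m * betaMoment m y := by
      filter_upwards [Ioi_mem_nhds hx] with y hy using ih hy
    rw [iteratedDeriv_succ, h.deriv_eq, ((hasDerivAt_betaMoment m hx).const_mul _).deriv]
    ring

theorem iteratedDeriv_nielsenBeta_neg_strictMono_of_odd :
    (∀ m : ℕ, Odd m →
      (∀ x : ℝ, 0 < x → iteratedDeriv m nielsenBeta x < 0) ∧
        StrictMonoOn (iteratedDeriv m nielsenBeta) (Set.Ioi 0)) ∧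
    (∀ m : ℕ, 1 ≤ m →
      StrictAntiOn (fun x => |iteratedDeriv m nielsenBeta x|) (Set.Ioi 0)) := by
  refine ⟨fun m hm => ?_, fun m _ => ?_⟩
  · have h : ∀ x : ℝ, 0 < x → iteratedDeriv m nielsenBeta x = -betaMoment m x := fun x hx => by
      rw [iteratedDeriv_nielsenBeta m hx, hm.neg_one_pow, neg_one_mul]
    refine ⟨fun x hx => ?_, fun x hx y hy hxy => ?_⟩
    · rw [h x hx]
      exact neg_neg_of_pos (betaMoment_pos m hx)
    · rw [h x hx, h y hy]
      exact neg_lt_neg (betaMoment_strictAntiOn m hx hy hxy)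
  · refine (betaMoment_strictAntiOn m).congr fun x hx => ?_
    simp [iteratedDeriv_nielsenBeta m hx, abs_mul, abs_of_pos (betaMoment_pos m hx)]
end

section
/- Nielsen's β-function is completely monotonic on (0, ∞): for every k ∈ ℕ₀ and every x > 0, (-1)^k β^(k)(x) ≥ 0. -/
/-!
The function `β` is the Laplace transform of the positive density `1 / (1 + e^{-t})` on `(0, ∞)`,
and the Laplace transform of a positive density is completely monotonic. Each differentiation in
`x` brings down a factor `-t`, so for `x > 0`
`β^(k)(x) = ∫₀^∞ (-t)^k e^{-x t} / (1 + e^{-t}) dt`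
(`iteratedDeriv_nielsenBeta`), and multiplying by `(-1)^k` makes the integrand nonnegative.
Differentiation under the integral sign (`hasDerivAt_integral_nielsenKernel`) is justified near `x`
by the dominating function `t^(k+1) e^{-(x/2) t}`.
-/

open Real MeasureTheory Set

/-- The `k`-th derivative in `x` of the integrand defining `nielsenBeta`. -/
noncomputable def nielsenKernel (k : ℕ) (x t : ℝ) : ℝ :=
  (-t) ^ k * (Real.exp (-x * t) / (1 + Real.exp (-t)))

lemma continuous_nielsenKernel (k : ℕ) (x : ℝ) : Continuous (nielsenKernel k x) := by
  unfold nielsenKernel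
  have h : ∀ t : ℝ, 1 + Real.exp (-t) ≠ 0 := fun t => by positivity
  fun_prop (disch := exact h)

lemma hasDerivAt_nielsenKernel (k : ℕ) (x t : ℝ) :
    HasDerivAt (fun y => nielsenKernel k y t) (nielsenKernel (k + 1) x t) x := by
  unfold nielsenKernel
  have h1 : HasDerivAt (fun y : ℝ => -y * t) (-1 * t) x := (hasDerivAt_id x).neg.mul_const t
  have h2 := (h1.exp.div_const (1 + Real.exp (-t))).const_mul ((-t) ^ k)
  refine h2.congr_deriv ?_
  ring

lemma norm_nielsenKernel_le (k : ℕ) {x y t : ℝ} (hxy : x ≤ y) (ht : 0 < t) :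
    ‖nielsenKernel k y t‖ ≤ t ^ k * Real.exp (-x * t) := by
  have hd : (1 : ℝ) ≤ 1 + Real.exp (-t) := by linarith [Real.exp_pos (-t)]
  have hq : 0 ≤ Real.exp (-y * t) / (1 + Real.exp (-t)) := by positivity
  unfold nielsenKernel
  rw [norm_mul, norm_pow, norm_neg, Real.norm_of_nonneg ht.le, Real.norm_of_nonneg hq]
  gcongr
  calc Real.exp (-y * t) / (1 + Real.exp (-t)) ≤ Real.exp (-y * t) :=
        div_le_self (Real.exp_pos _).le hd
    _ ≤ Real.exp (-x * t) := by gcongr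

lemma integrableOn_pow_mul_exp_neg_mul (k : ℕ) {x : ℝ} (hx : 0 < x) :
    IntegrableOn (fun t : ℝ => t ^ k * Real.exp (-x * t)) (Ioi 0) := by
  have hk : (-1 : ℝ) < k := by linarith [(Nat.cast_nonneg k : (0 : ℝ) ≤ k)]
  simpa using integrableOn_rpow_mul_exp_neg_mul_rpow hk one_pos hx

lemma integrableOn_nielsenKernel (k : ℕ) {x : ℝ} (hx : 0 < x) :
    IntegrableOn (nielsenKernel k x) (Ioi 0) := by
  refine (integrableOn_pow_mul_exp_neg_mul k hx).mono'
    (continuous_nielsenKernel k x).aestronglyMeasurable ?_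
  filter_upwards [ae_restrict_mem measurableSet_Ioi] with t ht
  exact norm_nielsenKernel_le k le_rfl ht

lemma hasDerivAt_integral_nielsenKernel (k : ℕ) {x : ℝ} (hx : 0 < x) :
    HasDerivAt (fun y => ∫ t in Ioi (0 : ℝ), nielsenKernel k y t)
      (∫ t in Ioi (0 : ℝ), nielsenKernel (k + 1) x t) x := by
  refine (hasDerivAt_integral_of_dominated_loc_of_deriv_le (Ioi_mem_nhds (half_lt_self hx))
    (Filter.Eventually.of_forall fun y => (continuous_nielsenKernel k y).aestronglyMeasurable)
    (integrableOn_nielsenKernel k hx)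
    (F' := fun y t => nielsenKernel (k + 1) y t)
    (continuous_nielsenKernel (k + 1) x).aestronglyMeasurable ?_
    (integrableOn_pow_mul_exp_neg_mul (k + 1) (half_pos hx)) ?_).2
  · filter_upwards [ae_restrict_mem measurableSet_Ioi] with t ht y hy
    exact norm_nielsenKernel_le (k + 1) (mem_Ioi.1 hy).le ht
  · exact Filter.Eventually.of_forall fun t y _ => hasDerivAt_nielsenKernel k y t

lemma iteratedDeriv_nielsenBeta_s4 (k : ℕ) {x : ℝ} (hx : 0 < x) :
    iteratedDeriv k nielsenBeta x = ∫ t in Ioi (0 : ℝ), nielsenKernel k x t := by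
  induction k generalizing x with
  | zero => simp [nielsenBeta, nielsenKernel]
  | succ k ih =>
    rw [iteratedDeriv_succ]
    -- The formula for `k` is only known on `(0, ∞)`, which suffices since this is a neighbourhood
    -- of `x`.
    have h : iteratedDeriv k nielsenBeta =ᶠ[nhds x]
        fun y => ∫ t in Ioi (0 : ℝ), nielsenKernel k y t := by
      filter_upwards [Ioi_mem_nhds hx] with y hy using ih hy
    rw [h.deriv_eq, (hasDerivAt_integral_nielsenKernel k hx).deriv]

theorem nielsenBeta_completely_monotonic (k : ℕ) (x : ℝ) (hx : 0 < x) :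
    0 ≤ (-1 : ℝ) ^ k * iteratedDeriv k nielsenBeta x := by
  rw [iteratedDeriv_nielsenBeta_s4 k hx, ← integral_const_mul]
  refine setIntegral_nonneg measurableSet_Ioi fun t ht => ?_
  have ht : 0 < t := ht
  have h : (-1 : ℝ) ^ k * nielsenKernel k x t
      = t ^ k * (Real.exp (-x * t) / (1 + Real.exp (-t))) := by
    rw [nielsenKernel, ← mul_assoc, ← mul_pow, neg_one_mul, neg_neg]
  rw [h]
  positivity
end

section
/- For all real numbers a, b with 0 < a < b, the double inequality (β'(a) + β'(b))/2 ≤ (β(b) - β(a))/(b - a) ≤ β'((a + b)/2) holds, where β' is the derivative of Nielsen's β-function. -/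
/-! The derivative of Nielsen's β-function is computed under the integral sign:
`β'(x) = ∫₀^∞ -t e^{-xt} / (1 + e^{-t}) dt` (`hasDerivAt_nielsenBeta`). After multiplication by
`b - a`, both inequalities become comparisons of integrals over `(0, ∞)`, and they already hold
for the integrands. With `m = (a + b) / 2` and `h = (b - a) t / 2 ≥ 0`, factoring out `e^{-mt}`
reduces these pointwise comparisons to `h ≤ sinh h ≤ h cosh h`. -/

open Real MeasureTheory Set

lemma sinh_le_mul_cosh {h : ℝ} (hh : 0 ≤ h) : Real.sinh h ≤ h * Real.cosh h := by
  have hd : ∀ x : ℝ, HasDerivAt (fun x => x * Real.cosh x - Real.sinh x) (x * Real.sinh x) x := by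
    intro x
    refine (((hasDerivAt_id x).mul (Real.hasDerivAt_cosh x)).sub
      (Real.hasDerivAt_sinh x)).congr_deriv ?_
    simp
  have hm : MonotoneOn (fun x => x * Real.cosh x - Real.sinh x) (Set.Ici (0 : ℝ)) := by
    refine monotoneOn_of_deriv_nonneg (convex_Ici 0) (by fun_prop)
      (fun x _ => (hd x).differentiableAt.differentiableWithinAt) fun x hx => ?_
    rw [interior_Ici] at hx
    rw [(hd x).deriv]
    exact mul_nonneg hx.le (Real.sinh_nonneg_iff.2 hx.le)
  have := hm Set.self_mem_Ici hh hh
  simp at this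
  linarith

/-- The upper comparison of integrands, before multiplication by the weight `1 / (1 + e^{-t})`. -/
lemma exp_sub_exp_le {a b t : ℝ} (hab : a ≤ b) (ht : 0 ≤ t) :
    Real.exp (-b * t) - Real.exp (-a * t)
      ≤ (b - a) * (-t * Real.exp (-((a + b) / 2) * t)) := by
  have hh : 0 ≤ (b - a) * t / 2 := by have := sub_nonneg.2 hab; positivity
  have hs := Real.self_le_sinh_iff.2 hh
  rw [Real.sinh_eq] at hs
  have ea : Real.exp (-a * t)
      = Real.exp (-((a + b) / 2) * t) * Real.exp ((b - a) * t / 2) := by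
    rw [← Real.exp_add]; ring_nf
  have eb : Real.exp (-b * t)
      = Real.exp (-((a + b) / 2) * t) * Real.exp (-((b - a) * t / 2)) := by
    rw [← Real.exp_add]; ring_nf
  rw [ea, eb]
  nlinarith [mul_le_mul_of_nonneg_left hs (Real.exp_pos (-((a + b) / 2) * t)).le]

/-- The lower comparison of integrands, before multiplication by the weight `1 / (1 + e^{-t})`. -/
lemma le_exp_sub_exp {a b t : ℝ} (hab : a ≤ b) (ht : 0 ≤ t) :
    (b - a) / 2 * (-t * Real.exp (-a * t) + -t * Real.exp (-b * t))
      ≤ Real.exp (-b * t) - Real.exp (-a * t) := by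
  have hh : 0 ≤ (b - a) * t / 2 := by have := sub_nonneg.2 hab; positivity
  have hs := sinh_le_mul_cosh hh
  rw [Real.sinh_eq, Real.cosh_eq] at hs
  have ea : Real.exp (-a * t)
      = Real.exp (-((a + b) / 2) * t) * Real.exp ((b - a) * t / 2) := by
    rw [← Real.exp_add]; ring_nf
  have eb : Real.exp (-b * t)
      = Real.exp (-((a + b) / 2) * t) * Real.exp (-((b - a) * t / 2)) := by
    rw [← Real.exp_add]; ring_nf
  rw [ea, eb]
  nlinarith [mul_le_mul_of_nonneg_left hs (Real.exp_pos (-((a + b) / 2) * t)).le]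

lemma integrableOn_nielsenBeta {x : ℝ} (hx : 0 < x) :
    IntegrableOn (fun t : ℝ => Real.exp (-x * t) / (1 + Real.exp (-t))) (Set.Ioi 0) := by
  refine (exp_neg_integrableOn_Ioi 0 hx).mono' ?_ (ae_of_all _ fun t => ?_)
  · exact Measurable.aestronglyMeasurable (by fun_prop)
  · rw [Real.norm_of_nonneg (by positivity)]
    exact div_le_self (by positivity) (by linarith [Real.exp_pos (-t)])

lemma hasDerivAt_nielsenBeta {x : ℝ} (hx : 0 < x) :
    IntegrableOn (fun t : ℝ => -t * Real.exp (-x * t) / (1 + Real.exp (-t))) (Set.Ioi 0) ∧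
      HasDerivAt nielsenBeta
        (∫ t in Set.Ioi (0 : ℝ), -t * Real.exp (-x * t) / (1 + Real.exp (-t))) x := by
  -- On the neighbourhood `(x / 2, ∞)` of `x`, the derivative is dominated by `t e^{-(x/2) t}`.
  refine hasDerivAt_integral_of_dominated_loc_of_deriv_le
    (F := fun y t => Real.exp (-y * t) / (1 + Real.exp (-t)))
    (F' := fun y t => -t * Real.exp (-y * t) / (1 + Real.exp (-t)))
    (bound := fun t => t * Real.exp (-(x / 2) * t))
    (Ioi_mem_nhds (show x / 2 < x by linarith)) ?_ (integrableOn_nielsenBeta hx) ?_ ?_ ?_ ?_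
  · exact Filter.Eventually.of_forall fun y => Measurable.aestronglyMeasurable (by fun_prop)
  · exact Measurable.aestronglyMeasurable (by fun_prop)
  · refine (ae_restrict_mem measurableSet_Ioi).mono fun t (ht : 0 < t) y (hy : x / 2 < y) => ?_
    rw [norm_div, norm_mul, norm_neg, Real.norm_of_nonneg ht.le,
      Real.norm_of_nonneg (Real.exp_pos _).le, Real.norm_of_nonneg (by positivity)]
    refine (div_le_self (by positivity) (by linarith [Real.exp_pos (-t)])).trans ?_
    have : -y * t ≤ -(x / 2) * t := by nlinarith
    gcongr
  · simpa [IntegrableOn] using integrableOn_rpow_mul_exp_neg_mul_rpow (p := 1) (s := 1) (b := x / 2)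
      (by norm_num) one_pos (by positivity)
  · refine ae_of_all _ fun t y _ => ?_
    have h : HasDerivAt (fun y : ℝ => -y * t) (-t) y := by
      simpa using (hasDerivAt_neg y).mul_const t
    refine (h.exp.div_const _).congr_deriv ?_
    ring

theorem nielsenBeta_hermite_hadamard (a b : ℝ) (ha : 0 < a) (hab : a < b) :
    (deriv nielsenBeta a + deriv nielsenBeta b) / 2 ≤
        (nielsenBeta b - nielsenBeta a) / (b - a) ∧
      (nielsenBeta b - nielsenBeta a) / (b - a) ≤ deriv nielsenBeta ((a + b) / 2) := by
  have hb : 0 < b := ha.trans hab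
  have hm : 0 < (a + b) / 2 := by positivity
  have hpos : 0 < b - a := sub_pos.2 hab
  obtain ⟨ia, da⟩ := hasDerivAt_nielsenBeta ha
  obtain ⟨ib, db⟩ := hasDerivAt_nielsenBeta hb
  obtain ⟨im, dm⟩ := hasDerivAt_nielsenBeta hm
  have ja := integrableOn_nielsenBeta ha
  have jb := integrableOn_nielsenBeta hb
  have hsub : nielsenBeta b - nielsenBeta a = ∫ t in Set.Ioi (0 : ℝ),
      (Real.exp (-b * t) / (1 + Real.exp (-t)) - Real.exp (-a * t) / (1 + Real.exp (-t))) :=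
    (integral_sub jb ja).symm
  rw [da.deriv, db.deriv, dm.deriv, hsub]
  constructor
  · rw [le_div_iff₀ hpos, div_mul_eq_mul_div, mul_comm, mul_div_right_comm, ← integral_add ia ib,
      ← integral_const_mul]
    refine setIntegral_mono_on ((ia.add ib).const_mul _) (jb.sub ja) measurableSet_Ioi
      fun t (ht : 0 < t) => ?_
    rw [← add_div, ← mul_div_assoc, ← sub_div]
    gcongr
    exact le_exp_sub_exp hab.le ht.le
  · rw [div_le_iff₀ hpos, mul_comm, ← integral_const_mul]
    refine setIntegral_mono_on (jb.sub ja) (im.const_mul _) measurableSet_Ioi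
      fun t (ht : 0 < t) => ?_
    rw [← mul_div_assoc, ← sub_div]
    gcongr
    exact exp_sub_exp_le hab.le ht.le
end

section
/- For every n ∈ ℕ₀ and every x > 0, the Turán-type inequality |β^(n+1)(x)|² ≤ |β^(n+2)(x)| · |β^(n)(x)| holds. -/
/-!
Nielsen's beta function is, up to the reflection `x ↦ -x`, the moment generating function of the
measure `ν = (1 + e^{-t})⁻¹ dt` on `(0, ∞)`. Hence `(-1)ⁿ β⁽ⁿ⁾(x)` is the weighted moment
`Mₙ = ∫ tⁿ e^{-xt} dν`. Since `∫ tⁿ (s t + 1)² e^{-xt} dν ≥ 0`, the quadratic polynomial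
`M_{n+2} s² + 2 M_{n+1} s + Mₙ` is nonnegative for every real `s`, so its discriminant is
nonpositive; this is `M_{n+1}² ≤ M_{n+2} Mₙ`.
-/

open Real MeasureTheory Set

/-- The measure with density `1 / (1 + e^{-t})` on `(0, ∞)`, of which `β` is the Laplace
transform. -/
noncomputable def nielsenMeasure : Measure ℝ :=
  (volume.restrict (Ioi (0:ℝ))).withDensity fun t => ENNReal.ofReal (1 / (1 + Real.exp (-t)))

lemma nielsenMeasure_le : nielsenMeasure ≤ volume.restrict (Ioi (0:ℝ)) := by
  have h : nielsenMeasure ≤ (volume.restrict (Ioi (0:ℝ))).withDensity 1 := by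
    refine withDensity_mono (Filter.Eventually.of_forall fun t => ?_)
    have ht := Real.exp_pos (-t)
    simp only [Pi.one_apply, ENNReal.ofReal_le_one]
    rw [div_le_one (by positivity)]
    linarith
  rwa [withDensity_one] at h

lemma nielsenBeta_eq_mgf (x : ℝ) :
    nielsenBeta x = ProbabilityTheory.mgf id nielsenMeasure (-x) := by
  rw [ProbabilityTheory.mgf, nielsenMeasure,
    integral_withDensity_eq_integral_toReal_smul (by fun_prop)
      (Filter.Eventually.of_forall fun _ => ENNReal.ofReal_lt_top), nielsenBeta]
  refine integral_congr_ae (Filter.Eventually.of_forall fun t => ?_)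
  have ht := Real.exp_pos (-t)
  simp only [id, smul_eq_mul]
  rw [ENNReal.toReal_ofReal (by positivity)]
  ring

lemma neg_mem_interior_integrableExpSet {x : ℝ} (hx : 0 < x) :
    -x ∈ interior (ProbabilityTheory.integrableExpSet id nielsenMeasure) := by
  refine mem_interior.2 ⟨Iio 0, fun y hy => ?_, isOpen_Iio, by simpa using hx⟩
  exact Integrable.mono_measure (integrableOn_exp_mul_Ioi hy 0) nielsenMeasure_le

/-- The derivatives of `β` are, up to sign, the moments of `e^{-xt} dν`. -/
lemma abs_iteratedDeriv_nielsenBeta (n : ℕ) {x : ℝ} (hx : 0 < x) :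
    |iteratedDeriv n nielsenBeta x| = ∫ t, t ^ n * Real.exp (-x * t) ∂nielsenMeasure := by
  have h : nielsenBeta = fun y => ProbabilityTheory.mgf id nielsenMeasure (-y) :=
    funext nielsenBeta_eq_mgf
  rw [h, iteratedDeriv_comp_neg, ProbabilityTheory.iteratedDeriv_mgf
    (neg_mem_interior_integrableExpSet hx), smul_eq_mul, abs_mul, abs_neg_one_pow, one_mul]
  refine abs_of_nonneg (integral_nonneg_of_ae ?_)
  filter_upwards [(Measure.absolutelyContinuous_of_le nielsenMeasure_le).ae_le
    (ae_restrict_mem measurableSet_Ioi)] with t ht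
  have ht' : 0 < t := ht
  simp only [Pi.zero_apply, id]
  positivity

theorem iteratedDeriv_nielsenBeta_turan (n : ℕ) (x : ℝ) (hx : 0 < x) :
    |iteratedDeriv (n + 1) nielsenBeta x| ^ 2 ≤
      |iteratedDeriv (n + 2) nielsenBeta x| * |iteratedDeriv n nielsenBeta x| := by
  have hint (k : ℕ) : Integrable (fun t => t ^ k * Real.exp (-x * t)) nielsenMeasure :=
    ProbabilityTheory.integrable_pow_mul_exp_of_mem_interior_integrableExpSet
      (neg_mem_interior_integrableExpSet hx) k
  simp only [abs_iteratedDeriv_nielsenBeta _ hx]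
  set M : ℕ → ℝ := fun k => ∫ t, t ^ k * Real.exp (-x * t) ∂nielsenMeasure with hM
  change M (n + 1) ^ 2 ≤ M (n + 2) * M n
  have hquad (s : ℝ) : 0 ≤ M (n + 2) * (s * s) + 2 * M (n + 1) * s + M n := by
    have heq : M (n + 2) * (s * s) + 2 * M (n + 1) * s + M n =
        ∫ t, (s * s) * (t ^ (n + 2) * Real.exp (-x * t)) +
          (2 * s) * (t ^ (n + 1) * Real.exp (-x * t)) +
          t ^ n * Real.exp (-x * t) ∂nielsenMeasure := by
      have h12 : Integrable (fun t => (s * s) * (t ^ (n + 2) * Real.exp (-x * t)) +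
          (2 * s) * (t ^ (n + 1) * Real.exp (-x * t))) nielsenMeasure :=
        ((hint _).const_mul _).add ((hint _).const_mul _)
      rw [integral_add h12 (hint _), integral_add ((hint _).const_mul _) ((hint _).const_mul _),
        integral_const_mul, integral_const_mul]
      simp only [hM]
      ring
    rw [heq]
    refine integral_nonneg_of_ae ?_
    filter_upwards [(Measure.absolutelyContinuous_of_le nielsenMeasure_le).ae_le
      (ae_restrict_mem measurableSet_Ioi)] with t ht
    have ht' : 0 < t := ht
    have h : 0 ≤ t ^ n * (s * t + 1) ^ 2 * Real.exp (-x * t) := by positivity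
    simp only [Pi.zero_apply]
    refine h.trans_eq ?_
    ring
  have hdisc := discrim_le_zero hquad
  rw [discrim] at hdisc
  linarith
end
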